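/- arXiv:1409.8369 — 2 statements merged into one kernel-verified Lean document; each statement's English description precedes it below -/
import Mathlib

section
/- Let a, b, c, d ∈ ℂ with ad − bc ≠ 0 and define the Möbius transformation α(t) := (at + b)/(ct + d). Assume: (1) α(−t) = −α(t) for all t ∈ ℂ at which both sides are defined; (2) α(α(t)) = t for all t at which the composition is defined; (3) α((−2t + 12)/(t + 2)) = (−2α(t) + 12)/(α(t) + 2) for all t at which both sides are defined. Then either (b = c = 0 and a = d, so that α(t) = t wherever defined) or (a = d = 0 and b = −12c, so that α(t) = −12/t wherever defined). -/
/-!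
Clearing denominators in `α (-t) = -α t` leaves `b * d = a * c * t ^ 2` for all admissible `t`, so
`b * d = 0` and `a * c = 0`; as `a * d - b * c ≠ 0`, the matrix of `α` is diagonal or antidiagonal
(`diag_or_antidiag_of_odd`). A diagonal involution is `t ↦ ± t`, and `t ↦ -t` does not commute with
`t ↦ (-2 * t + 12) / (t + 2)`, as one sees at `t = 0`. In the antidiagonal case `α t = k / t` with
`k = b / c`, and commutation reads `k * (t + 2) * (k + 2 * t) = (12 - 2 * t) * (12 * t - 2 * k)`,
whose quadratic coefficients give `k = -12`. Since the identities are only available where the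
denominators do not vanish, they are evaluated at explicit admissible points.
-/

/-- An odd nondegenerate Möbius transformation is `t ↦ (a / d) * t` or `t ↦ (b / c) / t`. -/
lemma diag_or_antidiag_of_odd (a b c d : ℂ) (hdet : a * d - b * c ≠ 0)
    (h : ∀ t : ℂ, c * t + d ≠ 0 → c * (-t) + d ≠ 0 →
      (a * (-t) + b) / (c * (-t) + d) = -((a * t + b) / (c * t + d))) :
    (b = 0 ∧ c = 0) ∨ (a = 0 ∧ d = 0) := by
  have key : ∀ t : ℂ, c * t + d ≠ 0 → c * (-t) + d ≠ 0 → b * d = a * c * t ^ 2 := by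
    intro t ht ht'
    have e := h t ht ht'
    rw [← neg_div, div_eq_div_iff ht' ht] at e
    linear_combination e / 2
  by_cases hd : d = 0
  · subst hd
    have hc : c ≠ 0 := by rintro rfl; simp at hdet
    have e := key 1 (by simpa using hc) (by simpa using hc)
    right
    simpa [hc] using e
  · have hb : b = 0 := by simpa [hd] using key 0 (by simpa using hd) (by simpa using hd)
    subst hb
    have ha : a ≠ 0 := by rintro rfl; simp at hdet
    refine Or.inl ⟨rfl, ?_⟩
    by_contra hc
    -- `2 * d / c` avoids the excluded points `± d / c` and `0`
    have hcd : c * (2 * d / c) = 2 * d := by field_simp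
    have e := key (2 * d / c)
      (by rw [hcd]; intro h0; exact hd (by linear_combination h0 / 3))
      (by rw [mul_neg, hcd]; intro h0; exact hd (by linear_combination -h0))
    simp [ha, hc, hd] at e

/-- the computational core of the uniqueness of rational SL₂-equivariant
involutions for binary quartics: a Möbius transformation `α(t) = (at+b)/(ct+d)` which is
odd, involutive and commutes with `t ↦ (−2t+12)/(t+2)` is either the identity `t ↦ t`
(with `b = c = 0`, `a = d`) or `t ↦ −12/t` (with `a = d = 0`, `b = −12c`). -/
theorem mobius_involution_binary_quartics (a b c d : ℂ) (hdet : a * d - b * c ≠ 0)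
    (α : ℂ → ℂ) (hα : ∀ t : ℂ, α t = (a * t + b) / (c * t + d))
    (h1 : ∀ t : ℂ, c * t + d ≠ 0 → c * (-t) + d ≠ 0 → α (-t) = -α t)
    (h2 : ∀ t : ℂ, c * t + d ≠ 0 → c * α t + d ≠ 0 → α (α t) = t)
    (h3 : ∀ t : ℂ, t + 2 ≠ 0 → c * t + d ≠ 0 →
      c * ((-2 * t + 12) / (t + 2)) + d ≠ 0 → α t + 2 ≠ 0 →
      α ((-2 * t + 12) / (t + 2)) = (-2 * α t + 12) / (α t + 2)) :
    (b = 0 ∧ c = 0 ∧ a = d ∧ ∀ t : ℂ, c * t + d ≠ 0 → α t = t) ∨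
    (a = 0 ∧ d = 0 ∧ b = -12 * c ∧ ∀ t : ℂ, c * t + d ≠ 0 → α t = -12 / t) := by
  rcases diag_or_antidiag_of_odd a b c d hdet
    (fun t ht ht' => by simpa only [hα] using h1 t ht ht') with ⟨rfl, rfl⟩ | ⟨rfl, rfl⟩
  · have hd : d ≠ 0 := by rintro rfl; simp at hdet
    have hα' : ∀ t, α t = a * t / d := fun t => by rw [hα, zero_mul, zero_add, add_zero]
    have e := h2 1 (by simpa using hd) (by simpa using hd)
    rw [hα', hα'] at e
    have e' : (a - d) * (a + d) = 0 := by
      field_simp at e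
      linear_combination e
    rcases mul_eq_zero.mp e' with h | h
    · obtain rfl := sub_eq_zero.mp h
      refine Or.inl ⟨rfl, rfl, rfl, fun t _ => ?_⟩
      rw [hα', mul_div_cancel_left₀ t hd]
    · obtain rfl := eq_neg_of_add_eq_zero_left h
      exfalso
      have e3 := h3 0 (by norm_num) (by simpa using hd) (by simpa using hd) (by rw [hα]; norm_num)
      simp only [hα] at e3
      norm_num [hd] at e3
      field_simp at e3
      norm_num at e3
  · have hc : c ≠ 0 := by rintro rfl; simp at hdet
    obtain ⟨k, rfl⟩ : ∃ k, b = k * c := ⟨b / c, by field_simp⟩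
    have hα' : ∀ t, α t = k / t := fun t => by
      rw [hα, zero_mul, zero_add, add_zero, mul_comm c t, mul_div_mul_right _ _ hc]
    have key : ∀ t : ℂ, t ≠ 0 → t + 2 ≠ 0 → -2 * t + 12 ≠ 0 → k + 2 * t ≠ 0 →
        k * (t + 2) * (k + 2 * t) = (12 - 2 * t) * (12 * t - 2 * k) := by
      intro t ht ht2 ht6 htk
      have hs : k / t + 2 = (k + 2 * t) / t := by field_simp
      have hn : -2 * (k / t) + 12 = (-2 * k + 12 * t) / t := by field_simp
      have e := h3 t ht2 (by simp [hc, ht])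
        (by rw [add_zero]; exact mul_ne_zero hc (div_ne_zero ht6 ht2))
        (by rw [hα', hs]; exact div_ne_zero htk ht)
      rw [hα', hα', hs, hn, div_div_div_cancel_right₀ ht, div_div_eq_mul_div,
        div_eq_div_iff ht6 htk] at e
      linear_combination e
    have hk : k = -12 := by
      -- at `t = 2` the identity becomes `(k + 12) * (k - 4) = 0`,
      -- at `t = -6` it becomes `(k + 12) * (k - 36) = 0`
      by_cases hk4 : k = -4
      · subst hk4
        have e := key (-6) (by norm_num) (by norm_num) (by norm_num) (by norm_num)
        norm_num at e
      · have e := key 2 (by norm_num) (by norm_num) (by norm_num)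
          (fun h => hk4 (by linear_combination h))
        have e' : (k + 12) * (k - 4) = 0 := by linear_combination e / 4
        rcases mul_eq_zero.mp e' with h | h
        · linear_combination h
        · obtain rfl := sub_eq_zero.mp h
          have e6 := key (-6) (by norm_num) (by norm_num) (by norm_num) (by norm_num)
          norm_num at e6
    subst hk
    exact Or.inr ⟨rfl, rfl, rfl, fun t _ => hα' t⟩
end

section
/- Let τ ∈ ℂ be a primitive cube root of unity, let a, b, c, d ∈ ℂ with ad − bc ≠ 0, and define α(t) := (at + b)/(ct + d). Assume α(α(t)) = t and α((−3t + 18)/(t + 3)) = (−3α(t) + 18)/(α(t) + 3) for all t at which the relevant expressions are defined. Then: (i) if α(τt) = τ·α(t) for all t at which both sides are defined, then b = c = 0 and a = d, i.e., α(t) = t wherever defined; (ii) if α(τt) = τ²·α(t) for all t at which both sides are defined, then a = d = 0 and b = −18c, i.e., α(t) = −18/t wherever defined. -/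
/-!
Off finitely many points, the hypothesis `α(τt) = s·α(t)` (with `s = τ` or `s = τ²`) is an identity
between quadratic polynomials in `t` after clearing denominators. Comparing coefficients gives
`ac = bd = 0` in both cases, together with `bc = 0` if `s = τ` and `ad = 0` if `s = τ²`
(`coeff_relations`). As `ad - bc ≠ 0`, it follows that `α` is `t ↦ (a/d)t` or `t ↦ (b/c)/t`
respectively. The remaining constant is determined by the commutation with
`t ↦ (-3t+18)/(t+3)`: for `(a/d)t` the value at `t = 0` suffices, and for `k/t` the values at
`t = 1` and `t = 3` give two quadratic equations in `k` whose only common root is `-18`.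
-/

open Polynomial in
/-- A quadratic polynomial vanishing away from the zeros of two nonzero linear polynomials is zero:
its product with them vanishes identically, and `ℂ[X]` is a domain. -/
lemma quadratic_coeffs_eq_zero {A B C c d c' d' : ℂ} (h1 : c ≠ 0 ∨ d ≠ 0) (h2 : c' ≠ 0 ∨ d' ≠ 0)
    (h : ∀ t : ℂ, c * t + d ≠ 0 → c' * t + d' ≠ 0 → A * t ^ 2 + B * t + C = 0) :
    A = 0 ∧ B = 0 ∧ C = 0 := by
  have linear_ne : ∀ {x y : ℂ}, x ≠ 0 ∨ y ≠ 0 →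
      (Polynomial.C x * X + Polynomial.C y : ℂ[X]) ≠ 0 := by
    intro x y hxy h0
    have e0 := congrArg (fun p : ℂ[X] => p.coeff 0) h0
    have e1 := congrArg (fun p : ℂ[X] => p.coeff 1) h0
    simp [coeff_C] at e0 e1
    tauto
  have hprod : (Polynomial.C A * X ^ 2 + Polynomial.C B * X + Polynomial.C C : ℂ[X]) *
      ((Polynomial.C c * X + Polynomial.C d) * (Polynomial.C c' * X + Polynomial.C d')) = 0 := by
    refine Polynomial.funext fun t => ?_
    simp only [eval_mul, eval_add, eval_C, eval_X, eval_pow, eval_zero]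
    by_cases ht : c * t + d = 0
    · simp [ht]
    by_cases ht' : c' * t + d' = 0
    · simp [ht']
    simp [h t ht ht']
  have hP := (mul_eq_zero.mp hprod).resolve_right (mul_ne_zero (linear_ne h1) (linear_ne h2))
  have e0 := congrArg (fun p : ℂ[X] => p.coeff 0) hP
  have e1 := congrArg (fun p : ℂ[X] => p.coeff 1) hP
  have e2 := congrArg (fun p : ℂ[X] => p.coeff 2) hP
  simp [coeff_X, coeff_C] at e0 e1 e2
  exact ⟨e2, e1, e0⟩

/-- The coefficients of `t²`, `t` and `1` in `α(τt) = s·α(t)` after clearing denominators. -/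
lemma coeff_relations {τ s a b c d : ℂ} (hτ : τ ≠ 0) (hs : s ≠ 1) (hdet : a * d - b * c ≠ 0)
    (h : ∀ t : ℂ, c * t + d ≠ 0 → c * (τ * t) + d ≠ 0 →
      (a * (τ * t) + b) / (c * (τ * t) + d) = s * ((a * t + b) / (c * t + d))) :
    a * c = 0 ∧ a * d * (τ - s) + b * c * (1 - s * τ) = 0 ∧ b * d = 0 := by
  have hcd : c ≠ 0 ∨ d ≠ 0 := by
    by_contra! hcd
    simp [hcd.1, hcd.2] at hdet
  have hcd' : c * τ ≠ 0 ∨ d ≠ 0 := hcd.imp_left (mul_ne_zero · hτ)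
  obtain ⟨h2, h1, h0⟩ := quadratic_coeffs_eq_zero (A := a * c * (τ * (1 - s)))
    (B := a * d * (τ - s) + b * c * (1 - s * τ)) (C := b * d * (1 - s)) hcd hcd' (by
      intro t ht ht'
      rw [mul_assoc] at ht'
      have e := h t ht ht'
      rw [← mul_div_assoc, div_eq_div_iff ht' ht] at e
      linear_combination e)
  have hs' : 1 - s ≠ 0 := sub_ne_zero.mpr hs.symm
  exact ⟨(mul_eq_zero.mp h2).resolve_right (mul_ne_zero hτ hs'), h1,
    (mul_eq_zero.mp h0).resolve_right hs'⟩


/-- the computational core of the uniqueness of rational SL₃-equivariant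
involutions for ternary cubics: a Möbius transformation `α(t) = (at+b)/(ct+d)` which is
involutive and commutes with `t ↦ (−3t+18)/(t+3)` is (i) the identity `t ↦ t`
(`b = c = 0`, `a = d`) if `α(τt) = τ·α(t)`, and (ii) `t ↦ −18/t` (`a = d = 0`,
`b = −18c`) if `α(τt) = τ²·α(t)`, where `τ` is a primitive cube root of unity. -/
theorem mobius_involution_ternary_cubics (τ : ℂ) (hτ1 : τ ^ 3 = 1) (hτ2 : τ ≠ 1)
    (a b c d : ℂ) (hdet : a * d - b * c ≠ 0)
    (α : ℂ → ℂ) (hα : ∀ t : ℂ, α t = (a * t + b) / (c * t + d))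
    (h2 : ∀ t : ℂ, c * t + d ≠ 0 → c * α t + d ≠ 0 → α (α t) = t)
    (h3 : ∀ t : ℂ, t + 3 ≠ 0 → c * t + d ≠ 0 →
      c * ((-3 * t + 18) / (t + 3)) + d ≠ 0 → α t + 3 ≠ 0 →
      α ((-3 * t + 18) / (t + 3)) = (-3 * α t + 18) / (α t + 3)) :
    ((∀ t : ℂ, c * t + d ≠ 0 → c * (τ * t) + d ≠ 0 → α (τ * t) = τ * α t) →
      b = 0 ∧ c = 0 ∧ a = d ∧ ∀ t : ℂ, c * t + d ≠ 0 → α t = t) ∧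
    ((∀ t : ℂ, c * t + d ≠ 0 → c * (τ * t) + d ≠ 0 → α (τ * t) = τ ^ 2 * α t) →
      a = 0 ∧ d = 0 ∧ b = -18 * c ∧ ∀ t : ℂ, c * t + d ≠ 0 → α t = -18 / t) := by
  have hτ0 : τ ≠ 0 := by
    rintro rfl
    norm_num at hτ1
  have hτsq : τ ^ 2 ≠ 1 := fun h => hτ2 (by linear_combination hτ1 - τ * h)
  simp only [hα] at h3 ⊢
  constructor
  · intro h
    obtain ⟨hac, hlin, hbd⟩ := coeff_relations hτ0 hτ2 hdet h
    have hbc : b * c = 0 := by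
      refine (mul_eq_zero.mp ?_).resolve_right (sub_ne_zero.mpr hτsq.symm)
      linear_combination hlin
    have had : a * d ≠ 0 := by simpa [hbc] using hdet
    have ha : a ≠ 0 := left_ne_zero_of_mul had
    have hd : d ≠ 0 := right_ne_zero_of_mul had
    obtain rfl : c = 0 := (mul_eq_zero.mp hac).resolve_left ha
    obtain rfl : b = 0 := (mul_eq_zero.mp hbd).resolve_right hd
    -- The Hesse-type map sends `0` to `6`, and `α` fixes `0`, hence also `6`.
    have h6 := h3 0 (by norm_num) (by simpa using hd) (by simpa using hd) (by simp)
    have hadEq : a = d := by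
      norm_num at h6
      field_simp at h6
      linear_combination h6
    refine ⟨rfl, rfl, hadEq, fun t _ => ?_⟩
    subst hadEq
    rw [add_zero, zero_mul, zero_add, mul_div_cancel_left₀ _ ha]
  · intro h
    obtain ⟨hac, hlin, hbd⟩ := coeff_relations hτ0 hτsq hdet h
    have had : a * d = 0 := by
      refine (mul_eq_zero.mp ?_).resolve_right (mul_ne_zero hτ0 (sub_ne_zero.mpr hτ2.symm))
      linear_combination hlin + b * c * hτ1
    have hbc : b * c ≠ 0 := by simpa [had] using hdet
    have hb : b ≠ 0 := left_ne_zero_of_mul hbc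
    have hc : c ≠ 0 := right_ne_zero_of_mul hbc
    obtain rfl : a = 0 := (mul_eq_zero.mp hac).resolve_right hc
    obtain rfl : d = 0 := (mul_eq_zero.mp hbd).resolve_left hb
    obtain ⟨k, rfl⟩ : ∃ k, b = k * c := ⟨b / c, by field_simp⟩
    have hα' : ∀ t : ℂ, (0 * t + k * c) / (c * t + 0) = k / t := fun t => by
      rw [zero_mul, zero_add, add_zero, mul_comm c t, mul_div_mul_right _ _ hc]
    simp only [hα'] at h3 ⊢
    simp only [add_zero] at h3
    have e1 : k + 3 ≠ 0 → 4 * k ^ 2 + 57 * k - 270 = 0 := by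
      intro hk
      have e := h3 1 (by norm_num) (by simpa using hc)
        (mul_ne_zero hc (by norm_num)) (by simpa using hk)
      norm_num at e
      field_simp at e
      linear_combination e
    have e3 : k + 9 ≠ 0 → 2 * k ^ 2 + 27 * k - 162 = 0 := by
      intro hk
      have hk3 : k / 3 + 3 ≠ 0 := fun h0 => hk (by linear_combination 3 * h0)
      have e := h3 3 (by norm_num) (mul_ne_zero hc (by norm_num))
        (mul_ne_zero hc (by norm_num)) hk3
      rw [eq_div_iff hk3] at e
      norm_num at e
      linear_combination 9 * e
    -- The excluded values `k = -3` and `k = -9` each violate the other quadratic equation.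
    have hk3 : k + 3 ≠ 0 := by
      intro h0
      obtain rfl : k = -3 := by linear_combination h0
      norm_num at e3
    have hk9 : k + 9 ≠ 0 := by
      intro h0
      obtain rfl : k = -9 := by linear_combination h0
      norm_num at e1
    have hk : k = -18 := by linear_combination (e1 hk3 - 2 * e3 hk9) / 3
    subst hk
    exact ⟨trivial, trivial, rfl, fun t _ => rfl⟩
end
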